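/- Let $E$ be a Banach space (over the real or complex field) and $1<p<\infty$ with $1/p+1/p^*=1$. The identity operator $id_E:E\to E$ is Cohen strongly $p$-summing if and only if $E$ is finite-dimensional. -/

import Mathlib

open scoped BigOperators

/-- The weak `q`-norm of a finite family of continuous linear functionals on `E`. -/
noncomputable def weakNorm {𝕜 E : Type*} [RCLike 𝕜] [NormedAddCommGroup E] [NormedSpace 𝕜 E]
    {ι : Type*} [Fintype ι] (q : ℝ) (φ : ι → E →L[𝕜] 𝕜) : ℝ :=
  ⨆ y : Metric.closedBall (0 : E) 1, (∑ i, ‖φ i (y : E)‖ ^ q) ^ (1 / q)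

section Aux

variable {𝕜 E : Type*} [RCLike 𝕜] [NormedAddCommGroup E] [NormedSpace 𝕜 E]

open BoundedContinuousFunction

lemma sum_le_opNorm {ι : Type*} [Fintype ι] {q : ℝ} (hq : 0 < q) (φ : ι → E →L[𝕜] 𝕜)
    (y : Metric.closedBall (0 : E) 1) :
    (∑ i, ‖φ i (y : E)‖ ^ q) ^ (1 / q) ≤ (∑ i, ‖φ i‖ ^ q) ^ (1 / q) := by
  have hy : ‖(y : E)‖ ≤ 1 := mem_closedBall_zero_iff.1 y.2
  have : ∀ i, ‖φ i (y : E)‖ ≤ ‖φ i‖ := fun i => (φ i).unit_le_opNorm _ hy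
  gcongr with i
  exact this i

lemma le_weakNorm {ι : Type*} [Fintype ι] {q : ℝ} (hq : 0 < q) (φ : ι → E →L[𝕜] 𝕜)
    (y : Metric.closedBall (0 : E) 1) :
    (∑ i, ‖φ i (y : E)‖ ^ q) ^ (1 / q) ≤ weakNorm q φ := by
  refine le_ciSup (f := fun y : Metric.closedBall (0 : E) 1 =>
    (∑ i, ‖φ i (y : E)‖ ^ q) ^ (1 / q)) ⟨(∑ i, ‖φ i‖ ^ q) ^ (1 / q), ?_⟩ y
  rintro _ ⟨y, rfl⟩
  exact sum_le_opNorm hq φ y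

lemma easy_dir (p q : ℝ) (hpq : p.HolderConjugate q) [FiniteDimensional 𝕜 E] :
    ∃ C > 0, ∀ (m : ℕ) (x : Fin m → E) (φ : Fin m → E →L[𝕜] 𝕜),
        ∑ i, ‖φ i (x i)‖ ≤ C * (∑ i, ‖x i‖ ^ p) ^ (1 / p) * weakNorm q φ := by
  have hq : 0 < q := hpq.symm.pos
  let b := Module.finBasis 𝕜 E
  let c : ∀ j, E →L[𝕜] 𝕜 := fun j => LinearMap.toContinuousLinearMap (b.coord j)
  refine ⟨(∑ j, ‖c j‖ * ‖b j‖) + 1, by positivity, ?_⟩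
  intro m x φ
  have hw : 0 ≤ weakNorm q φ :=
    le_trans (by positivity) (le_weakNorm hq φ ⟨0, by simp⟩)
  have key : ∀ j, ∑ i, ‖x i‖ * ‖φ i (b j)‖ ≤
      ‖b j‖ * ((∑ i, ‖x i‖ ^ p) ^ (1 / p) * weakNorm q φ) := by
    intro j
    have hb : ‖b j‖ ≠ 0 := norm_ne_zero_iff.2 (b.ne_zero j)
    let e : E := ((‖b j‖ : 𝕜)⁻¹) • b j
    have he : ‖e‖ = 1 := by simp [e, norm_smul, hb]
    have h1 : ∀ i, ‖φ i (b j)‖ = ‖b j‖ * ‖φ i e‖ := by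
      intro i
      simp only [e, map_smul, norm_smul, norm_inv, RCLike.norm_ofReal, abs_norm]
      field_simp
    calc ∑ i, ‖x i‖ * ‖φ i (b j)‖ = ‖b j‖ * ∑ i, ‖x i‖ * ‖φ i e‖ := by
          rw [Finset.mul_sum]
          refine Finset.sum_congr rfl fun i _ => ?_
          rw [h1 i]; ring
      _ ≤ ‖b j‖ * ((∑ i, ‖x i‖ ^ p) ^ (1 / p) * (∑ i, ‖φ i e‖ ^ q) ^ (1 / q)) := by
          gcongr
          exact Real.inner_le_Lp_mul_Lq_of_nonneg _ hpq (fun _ _ => norm_nonneg _)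
            (fun _ _ => norm_nonneg _)
      _ ≤ _ := by
          gcongr
          exact le_weakNorm hq φ ⟨e, by simp [he]⟩
  have hx : ∀ i, ‖φ i (x i)‖ ≤ ∑ j, ‖c j‖ * (‖x i‖ * ‖φ i (b j)‖) := by
    intro i
    have h : φ i (x i) = ∑ j, c j (x i) * φ i (b j) := by
      conv_lhs => rw [← b.sum_repr (x i), map_sum]
      refine Finset.sum_congr rfl fun j _ => ?_
      rw [map_smul, smul_eq_mul]
      rfl
    rw [h]
    refine (norm_sum_le _ _).trans (Finset.sum_le_sum fun j _ => ?_)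
    rw [norm_mul, ← mul_assoc]
    gcongr
    exact (c j).le_opNorm _
  calc ∑ i, ‖φ i (x i)‖ ≤ ∑ i, ∑ j, ‖c j‖ * (‖x i‖ * ‖φ i (b j)‖) :=
        Finset.sum_le_sum fun i _ => hx i
    _ = ∑ j, ‖c j‖ * ∑ i, ‖x i‖ * ‖φ i (b j)‖ := by
        rw [Finset.sum_comm]; simp only [Finset.mul_sum]
    _ ≤ ∑ j, ‖c j‖ * (‖b j‖ * ((∑ i, ‖x i‖ ^ p) ^ (1 / p) * weakNorm q φ)) := by
        gcongr with j; exact key j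
    _ = (∑ j, ‖c j‖ * ‖b j‖) * ((∑ i, ‖x i‖ ^ p) ^ (1 / p) * weakNorm q φ) := by
        rw [Finset.sum_mul]; simp only [mul_assoc]
    _ ≤ _ := by
        rw [mul_assoc]
        gcongr
        linarith

lemma summing_of_cohen (p q : ℝ) (hpq : p.HolderConjugate q) (C : ℝ) (hC : 0 < C)
    (h : ∀ (m : ℕ) (x : Fin m → E) (φ : Fin m → E →L[𝕜] 𝕜),
        ∑ i, ‖φ i (x i)‖ ≤ C * (∑ i, ‖x i‖ ^ p) ^ (1 / p) * weakNorm q φ)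
    (m : ℕ) (φ : Fin m → E →L[𝕜] 𝕜) (M : ℝ)
    (hM : ∀ y : Metric.closedBall (0 : E) 1, ∑ i, ‖φ i (y : E)‖ ^ q ≤ M) :
    ∑ i, ‖φ i‖ ^ q ≤ (2 * C) ^ q * M := by
  have hq : 0 < q := hpq.symm.pos
  have hp : 0 < p := hpq.pos
  have hM0 : 0 ≤ M := le_trans (by positivity) (hM ⟨0, by simp⟩)
  have hz : ∀ i, ∃ z : E, ‖z‖ ≤ 1 ∧ ‖φ i‖ / 2 ≤ ‖φ i z‖ := by
    intro i
    rcases (norm_nonneg (φ i)).eq_or_lt with h0 | h0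
    · exact ⟨0, by simp, by simp [← h0]⟩
    · obtain ⟨z, hz, hz'⟩ := (φ i).exists_lt_apply_of_lt_opNorm (r := ‖φ i‖ / 2) (by linarith)
      exact ⟨z, hz.le, hz'.le⟩
  choose z hz1 hz2 using hz
  set S := ∑ i, ‖φ i‖ ^ q with hS
  have hS0 : 0 ≤ S := by positivity
  have hw : weakNorm q φ ≤ M ^ (1 / q) := by
    have : Nonempty (Metric.closedBall (0 : E) 1) := ⟨⟨0, by simp⟩⟩
    refine ciSup_le fun y => ?_
    have := hM y
    gcongr
  have h1 := h m (fun i => ((‖φ i‖ ^ (q - 1) : ℝ) : 𝕜) • z i) φ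
  have h2 : S / 2 ≤ ∑ i, ‖φ i (((‖φ i‖ ^ (q - 1) : ℝ) : 𝕜) • z i)‖ := by
    rw [hS, Finset.sum_div]
    refine Finset.sum_le_sum fun i _ => ?_
    rw [map_smul, norm_smul, RCLike.norm_ofReal, abs_of_nonneg (by positivity)]
    calc ‖φ i‖ ^ q / 2 = ‖φ i‖ ^ (q - 1) * (‖φ i‖ / 2) := by
          have := Real.rpow_add_one' (norm_nonneg (φ i)) (y := q - 1) (by simpa using hq.ne')
          rw [sub_add_cancel] at this
          rw [this]; ring
      _ ≤ _ := by gcongr; exact hz2 i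
  have h3 : ∑ i, ‖((‖φ i‖ ^ (q - 1) : ℝ) : 𝕜) • z i‖ ^ p ≤ S := by
    refine Finset.sum_le_sum fun i _ => ?_
    rw [norm_smul, RCLike.norm_ofReal, abs_of_nonneg (by positivity)]
    calc (‖φ i‖ ^ (q - 1) * ‖z i‖) ^ p ≤ (‖φ i‖ ^ (q - 1) * 1) ^ p := by
          gcongr; exact hz1 i
      _ = ‖φ i‖ ^ q := by
          rw [mul_one, ← Real.rpow_mul (norm_nonneg _), hpq.symm.sub_one_mul_conj]
  have h4 : S / 2 ≤ C * S ^ (1 / p) * M ^ (1 / q) := by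
    refine h2.trans (h1.trans ?_)
    have hw0 : 0 ≤ weakNorm q φ :=
      le_trans (by positivity) (le_weakNorm hq φ ⟨0, by simp⟩)
    gcongr
  rcases hS0.eq_or_lt with h0 | h0
  · rw [← h0]; positivity
  have h5 : S ^ (1 / q) ≤ 2 * C * M ^ (1 / q) := by
    have hs : S = S ^ (1 / p) * S ^ (1 / q) := by
      rw [← Real.rpow_add h0]
      have := hpq.inv_add_inv_eq_one
      simp [this]
    have hpos : 0 < S ^ (1 / p) := by positivity
    refine le_of_mul_le_mul_left ?_ hpos
    rw [← hs]
    linarith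
  have h6 : (S ^ (1 / q)) ^ q ≤ (2 * C * M ^ (1 / q)) ^ q := by gcongr
  rw [Real.mul_rpow (by positivity) (by positivity), ← Real.rpow_mul hS0, ← Real.rpow_mul hM0] at h6
  simpa [hq.ne'] using h6

/-- The function `y ↦ ‖φ y‖ ^ q` on the unit ball. -/
noncomputable def powFun (q : ℝ) (hq : 0 < q) (φ : E →L[𝕜] 𝕜) :
    Metric.closedBall (0 : E) 1 →ᵇ ℝ :=
  BoundedContinuousFunction.ofNormedAddCommGroup (fun y => ‖φ (y : E)‖ ^ q)
    (by
      refine Continuous.rpow_const (by fun_prop) (fun _ => Or.inr hq.le)) (‖φ‖ ^ q)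
    (by
      intro y
      have hy : ‖(y : E)‖ ≤ 1 := mem_closedBall_zero_iff.1 y.2
      have := φ.unit_le_opNorm _ hy
      rw [Real.norm_of_nonneg (by positivity)]
      gcongr)

@[simp] lemma powFun_apply (q : ℝ) (hq : 0 < q) (φ : E →L[𝕜] 𝕜)
    (y : Metric.closedBall (0 : E) 1) : powFun q hq φ y = ‖φ (y : E)‖ ^ q := rfl

lemma pietsch (q : ℝ) (hq : 0 < q) (D : ℝ) 
    (h : ∀ (m : ℕ) (φ : Fin m → E →L[𝕜] 𝕜) (M : ℝ),
      (∀ y : Metric.closedBall (0 : E) 1, ∑ i, ‖φ i (y : E)‖ ^ q ≤ M) →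
      ∑ i, ‖φ i‖ ^ q ≤ D * M) (hD : 0 < D) :
    ∃ L : (Metric.closedBall (0 : E) 1 →ᵇ ℝ) →ₗ[ℝ] ℝ,
      (∀ f, (∀ y, 0 ≤ f y) → 0 ≤ L f) ∧ L (BoundedContinuousFunction.const _ 1) = 1 ∧
      ∀ φ : E →L[𝕜] 𝕜, ‖φ‖ ^ q ≤ D * L (powFun q hq φ) := by
  let B := Metric.closedBall (0 : E) 1
  have : Nonempty B := ⟨⟨0, by simp [B]⟩⟩
  let one : B →ᵇ ℝ := BoundedContinuousFunction.const _ 1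
  let P : Set (B →ᵇ ℝ) := {f | ∃ ε > 0, ∀ y, ε ≤ f y}
  let A : Set (B →ᵇ ℝ) := {g | ∃ (m : ℕ) (φ : Fin m → E →L[𝕜] 𝕜),
    ∀ y, g y = ∑ i, ‖φ i‖ ^ q - D * ∑ i, ‖φ i (y : E)‖ ^ q}
  have hPo : IsOpen P := by
    rw [Metric.isOpen_iff]
    rintro f ⟨ε, hε, hf⟩
    refine ⟨ε / 2, by positivity, fun g hg => ⟨ε / 2, by positivity, fun y => ?_⟩⟩
    have h1 := BoundedContinuousFunction.dist_coe_le_dist (f := g) (g := f) y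
    have h2 : dist g f < ε / 2 := hg
    rw [Real.dist_eq] at h1
    have := (abs_le.1 (h1.trans h2.le)).1
    have := hf y
    linarith
  have hPc : Convex ℝ P := by
    rintro f ⟨ε, hε, hf⟩ g ⟨η, hη, hg⟩ a b ha hb hab
    refine ⟨a * ε + b * η, ?_, fun y => ?_⟩
    · rcases ha.eq_or_lt with h0 | h0
      · have : b = 1 := by linarith
        subst this; rw [← h0]; linarith
      · have := mul_pos h0 hε
        have := mul_nonneg hb hη.le
        linarith
    · have := mul_le_mul_of_nonneg_left (hf y) ha
      have := mul_le_mul_of_nonneg_left (hg y) hb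
      simp only [BoundedContinuousFunction.coe_add, BoundedContinuousFunction.coe_smul,
        Pi.add_apply, smul_eq_mul]
      linarith
  have hsc : ∀ (a : ℝ), 0 ≤ a → ‖((a ^ (1 / q) : ℝ) : 𝕜)‖ ^ q = a := by
    intro a ha
    rw [RCLike.norm_ofReal, abs_of_nonneg (by positivity), ← Real.rpow_mul ha]
    simp [hq.ne']
  have hAc : Convex ℝ A := by
    rintro f ⟨m, φ, hf⟩ g ⟨n, ψ, hg⟩ a b ha hb hab
    refine ⟨m + n, Fin.append (fun i => ((a ^ (1 / q) : ℝ) : 𝕜) • φ i)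
      (fun i => ((b ^ (1 / q) : ℝ) : 𝕜) • ψ i), fun y => ?_⟩
    simp only [BoundedContinuousFunction.coe_add, BoundedContinuousFunction.coe_smul,
        Pi.add_apply, smul_eq_mul, Fin.sum_univ_add, Fin.append_left, Fin.append_right, hf, hg,
        norm_smul, _root_.smul_apply, norm_mul,
        Real.mul_rpow (norm_nonneg _) (norm_nonneg _), hsc a ha, hsc b hb, ← Finset.mul_sum]
    ring
  have hdisj : Disjoint P A := by
    rw [Set.disjoint_left]
    rintro f ⟨ε, hε, hf⟩ ⟨m, φ, hfφ⟩
    have h1 := h m φ ((∑ i, ‖φ i‖ ^ q - ε) / D) (fun y => by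
      rw [le_div_iff₀ hD]
      have h1 := hf y
      rw [hfφ y] at h1
      linarith)
    rw [mul_div_cancel₀ _ hD.ne'] at h1
    linarith
  obtain ⟨F, u, hFP, hFA⟩ := geometric_hahn_banach_open hPc hPo hAc hdisj
  have hu : u ≤ 0 := by
    have := hFA 0 ⟨0, Fin.elim0, by simp⟩
    simpa using this
  have hc : ∀ ε : ℝ, 0 < ε → ∀ f : B →ᵇ ℝ, (∀ y, 0 ≤ f y) → F f + ε * F one < u := by
    intro ε hε f hf
    have := hFP (f + ε • one) ⟨ε, hε, fun y => by simpa [one] using hf y⟩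
    simpa using this
  have hone : F one < 0 := by
    have := hFP one ⟨1, one_pos, fun y => by simp [one]⟩
    linarith
  have hu0 : u = 0 := by
    refine le_antisymm hu ?_
    by_contra hneg
    push Not at hneg
    have := hc (u / F one) (div_pos_of_neg_of_neg hneg hone) 0 (by simp)
    rw [div_mul_cancel₀ _ hone.ne] at this
    simp at this
  have hpos : ∀ f : B →ᵇ ℝ, (∀ y, 0 ≤ f y) → F f ≤ 0 := by
    intro f hf
    by_contra hneg
    push Not at hneg
    have := hc (F f / (- F one)) (div_pos hneg (by linarith)) f hf
    rw [hu0, div_mul_eq_mul_div, div_neg, mul_div_cancel_right₀ _ hone.ne] at this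
    simp at this
  refine ⟨(F one)⁻¹ • F.toLinearMap, ?_, ?_, ?_⟩
  · intro f hf
    exact mul_nonneg_of_nonpos_of_nonpos (inv_nonpos.2 hone.le) (hpos f hf)
  · exact inv_mul_cancel₀ hone.ne
  · intro φ
    have h1 := hFA (‖φ‖ ^ q • one - D • powFun q hq φ) ⟨1, fun _ => φ, fun y => by
      simp [one]; exact Or.inl rfl⟩
    rw [hu0, map_sub, map_smul, map_smul, smul_eq_mul, smul_eq_mul] at h1
    have h2 := mul_nonpos_of_nonpos_of_nonneg (inv_nonpos.2 hone.le) h1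
    rw [mul_sub, mul_comm (‖φ‖ ^ q), inv_mul_cancel_left₀ hone.ne] at h2
    change _ ≤ D * ((F one)⁻¹ * F (powFun q hq φ))
    linarith

/-- The real inner product function `y ↦ Re (φ y * conj (ψ y))` on the unit ball. -/
noncomputable def innFun (φ ψ : E →L[𝕜] 𝕜) : Metric.closedBall (0 : E) 1 →ᵇ ℝ :=
  BoundedContinuousFunction.ofNormedAddCommGroup
    (fun y => RCLike.re (φ (y : E)) * RCLike.re (ψ (y : E))
      + RCLike.im (φ (y : E)) * RCLike.im (ψ (y : E)))
    (by fun_prop) (‖φ‖ * ‖ψ‖ + ‖φ‖ * ‖ψ‖)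
    (by
      intro y
      have hy : ‖(y : E)‖ ≤ 1 := mem_closedBall_zero_iff.1 y.2
      have h1 := φ.unit_le_opNorm _ hy
      have h2 := ψ.unit_le_opNorm _ hy
      refine (norm_add_le _ _).trans ?_
      rw [norm_mul, norm_mul]
      have a1 := (RCLike.abs_re_le_norm (φ (y : E))).trans h1
      have a2 := (RCLike.abs_im_le_norm (φ (y : E))).trans h1
      have a3 := (RCLike.abs_re_le_norm (ψ (y : E))).trans h2
      have a4 := (RCLike.abs_im_le_norm (ψ (y : E))).trans h2
      simp only [Real.norm_eq_abs]
      gcongr)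

lemma innFun_apply (φ ψ : E →L[𝕜] 𝕜) (y : Metric.closedBall (0 : E) 1) :
    innFun φ ψ y = RCLike.re (φ (y : E)) * RCLike.re (ψ (y : E))
      + RCLike.im (φ (y : E)) * RCLike.im (ψ (y : E)) := rfl

lemma innFun_self (φ : E →L[𝕜] 𝕜) (y : Metric.closedBall (0 : E) 1) :
    innFun φ φ y = ‖φ (y : E)‖ ^ 2 := by
  rw [innFun_apply, RCLike.norm_sq_eq_def]
  

lemma lower_two (q : ℝ) (hq : 0 < q) (D : ℝ) (hD : 0 < D)
    (L : (Metric.closedBall (0 : E) 1 →ᵇ ℝ) →ₗ[ℝ] ℝ)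
    (hL : ∀ f, (∀ y, 0 ≤ f y) → 0 ≤ L f) (hL1 : L (BoundedContinuousFunction.const _ 1) = 1)
    (h : ∀ φ : E →L[𝕜] 𝕜, ‖φ‖ ^ q ≤ D * L (powFun q hq φ)) :
    ∃ K > 0, ∀ φ : E →L[𝕜] 𝕜, ‖φ‖ ^ 2 ≤ K * L (innFun φ φ) := by
  set δ : ℝ := (1 / (2 * D)) ^ (1 / q) with hδ
  have hδ0 : 0 < δ := by positivity
  have hδq : δ ^ q = 1 / (2 * D) := by
    rw [hδ, ← Real.rpow_mul (by positivity)]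
    simp [hq.ne']
  refine ⟨2 * D / δ ^ 2, by positivity, fun φ => ?_⟩
  rcases (norm_nonneg φ).eq_or_lt with h0 | h0
  · have : φ = 0 := norm_eq_zero.1 h0.symm
    have h3 : 0 ≤ L (innFun φ φ) := hL _ fun y => by rw [innFun_self]; positivity
    rw [← h0]
    have : (0 : ℝ) ^ 2 = 0 := by norm_num
    rw [this]
    positivity
  set N := ‖φ‖ with hN
  have hNq : 0 < N ^ q := by positivity
  have hpt : ∀ y : Metric.closedBall (0 : E) 1,
      ‖φ (y : E)‖ ^ q ≤ N ^ q * δ ^ q + N ^ q / (δ ^ 2 * N ^ 2) * ‖φ (y : E)‖ ^ 2 := by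
    intro y
    have hy : ‖(y : E)‖ ≤ 1 := mem_closedBall_zero_iff.1 y.2
    have h1 : ‖φ (y : E)‖ ≤ N := φ.unit_le_opNorm _ hy
    rcases le_total (‖φ (y : E)‖) (N * δ) with h2 | h2
    · have : ‖φ (y : E)‖ ^ q ≤ (N * δ) ^ q := by gcongr
      rw [Real.mul_rpow h0.le hδ0.le] at this
      have : 0 ≤ N ^ q / (δ ^ 2 * N ^ 2) * ‖φ (y : E)‖ ^ 2 := by positivity
      linarith
    · have a1 : ‖φ (y : E)‖ ^ q ≤ N ^ q := by gcongr
      have a2 : (N * δ) ^ 2 ≤ ‖φ (y : E)‖ ^ 2 := by gcongr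
      have a3 : N ^ q ≤ N ^ q / (δ ^ 2 * N ^ 2) * ‖φ (y : E)‖ ^ 2 := by
        rw [div_mul_eq_mul_div, le_div_iff₀ (by positivity)]
        gcongr
        linarith [mul_pow N δ 2]
      have : 0 ≤ N ^ q * δ ^ q := by positivity
      linarith
  have h1 := hL ((N ^ q * δ ^ q) • BoundedContinuousFunction.const _ 1
    + (N ^ q / (δ ^ 2 * N ^ 2)) • innFun φ φ - powFun q hq φ) (fun y => by
      have := hpt y
      simp only [BoundedContinuousFunction.coe_sub, BoundedContinuousFunction.coe_add,
        BoundedContinuousFunction.coe_smul, Pi.sub_apply, Pi.add_apply, smul_eq_mul,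
        innFun_self, powFun_apply, BoundedContinuousFunction.const_apply, mul_one]
      linarith)
  rw [map_sub, map_add, map_smul, map_smul, hL1, smul_eq_mul, smul_eq_mul, mul_one, hδq] at h1
  have h2 := h φ
  have h3 : N ^ q ≤ D * (N ^ q * (1 / (2 * D)) + N ^ q / (δ ^ 2 * N ^ 2) * L (innFun φ φ)) := by
    refine h2.trans ?_
    gcongr
    linarith
  have h4 : D * (N ^ q * (1 / (2 * D)) + N ^ q / (δ ^ 2 * N ^ 2) * L (innFun φ φ))
      = N ^ q * (1 / 2 + D / (δ ^ 2 * N ^ 2) * L (innFun φ φ)) := by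
    field_simp
  rw [h4] at h3
  have h5 : 1 ≤ 1 / 2 + D / (δ ^ 2 * N ^ 2) * L (innFun φ φ) := by
    refine le_of_mul_le_mul_left ?_ hNq
    linarith
  have h6 : 1 ≤ (2 * D / δ ^ 2 * L (innFun φ φ)) / N ^ 2 := by
    have : (2 * D / δ ^ 2 * L (innFun φ φ)) / N ^ 2
      = 2 * (D / (δ ^ 2 * N ^ 2) * L (innFun φ φ)) := by field_simp
    linarith
  rwa [one_le_div (by positivity)] at h6

/-- The real bilinear form induced by a mean. -/
noncomputable def formOf (L : (Metric.closedBall (0 : E) 1 →ᵇ ℝ) →ₗ[ℝ] ℝ)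
    {V : Type*} [AddCommGroup V] [Module ℝ V] (J : V →ₗ[ℝ] (E →L[𝕜] 𝕜)) : LinearMap.BilinForm ℝ V :=
  LinearMap.mk₂ ℝ (fun φ ψ => L (innFun (J φ) (J ψ)))
    (by
      intro a b c
      rw [← map_add]; congr 1; ext y
      simp [innFun_apply]; ring)
    (by
      intro a b c
      rw [← map_smul]; congr 1; ext y
      simp [innFun_apply, RCLike.smul_re, RCLike.smul_im]; ring)
    (by
      intro a b c
      rw [← map_add]; congr 1; ext y
      simp [innFun_apply]; ring)
    (by
      intro a b c
      rw [← map_smul]; congr 1; ext y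
      simp [innFun_apply, RCLike.smul_re, RCLike.smul_im]; ring)

lemma dim_bound (L : (Metric.closedBall (0 : E) 1 →ᵇ ℝ) →ₗ[ℝ] ℝ)
    (hL : ∀ f, (∀ y, 0 ≤ f y) → 0 ≤ L f) (hL1 : L (BoundedContinuousFunction.const _ 1) = 1)
    (K : ℝ) (hK : 0 < K) (h : ∀ φ : E →L[𝕜] 𝕜, ‖φ‖ ^ 2 ≤ K * L (innFun φ φ))
    {V : Type*} [AddCommGroup V] [Module ℝ V] (J : V →ₗ[ℝ] (E →L[𝕜] 𝕜))
    (hJ : Function.Injective J) [FiniteDimensional ℝ V] :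
    (Module.finrank ℝ V : ℝ) ≤ 2 * K := by
  have hsymm : LinearMap.IsSymm (formOf L J) := ⟨fun a b => by
    change L _ = L _
    congr 1; ext y; simp [innFun_apply]; ring⟩
  obtain ⟨n, hn, v, hv'⟩ : ∃ n, Module.finrank ℝ V = n ∧ ∃ v : Module.Basis (Fin n) ℝ V,
      LinearMap.IsOrthoᵢ (formOf L J) v :=
    ⟨_, rfl, LinearMap.BilinForm.exists_orthogonal_basis (K := ℝ) (V := V) (B := formOf L J) hsymm⟩
  rw [hn]
  have hv : ∀ i j, i ≠ j → formOf L J (v i) (v j) = 0 := fun i j hij => hv' hij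
  have hpos : ∀ i, 0 < formOf L J (v i) (v i) := by
    intro i
    have h1 := h (J (v i))
    have h2 : (J (v i)) ≠ 0 := by
      intro h0
      exact v.ne_zero i (hJ (by rw [h0, map_zero]))
    have h3 : 0 < ‖(J (v i))‖ ^ 2 := by positivity
    have h4 : 0 < K * L (innFun (J (v i)) (J (v i))) := h3.trans_le h1
    exact (mul_pos_iff_of_pos_left hK).1 h4
  set β : Fin n → ℝ := fun i => formOf L J (v i) (v i) with hβ
  -- combination bound
  have hcomb : ∀ (c : Fin n → ℝ), ‖(J (∑ i, c i • v i))‖ ^ 2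
      ≤ K * ∑ i, c i ^ 2 * β i := by
    intro c
    have h1 := h (J (∑ i, c i • v i))
    refine h1.trans_eq ?_
    congr 1
    change formOf L J (∑ i, c i • v i) (∑ i, c i • v i) = _
    rw [LinearMap.BilinForm.sum_left]
    refine Finset.sum_congr rfl fun i _ => ?_
    rw [LinearMap.BilinForm.sum_right, Finset.sum_eq_single i]
    · simp [hβ]; ring
    · intro j _ hj
      have : formOf L J (v i) (v j) = 0 := hv _ _ hj.symm
      simp [this]
    · simp
  have hgen : ∀ (y : Metric.closedBall (0 : E) 1) (r : 𝕜 →ₗ[ℝ] ℝ), (∀ z, |r z| ≤ ‖z‖) →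
      ∑ i, (r ((J (v i)) (y : E))) ^ 2 / β i ≤ K := by
    intro y r hr
    have hy : ‖(y : E)‖ ≤ 1 := mem_closedBall_zero_iff.1 y.2
    set a : Fin n → ℝ := fun i => r ((J (v i)) (y : E)) with ha
    set T := ∑ i, a i ^ 2 / β i with hT
    have hT0 : 0 ≤ T := Finset.sum_nonneg fun i _ => div_nonneg (sq_nonneg _) (hpos i).le
    have h1 := hcomb (fun i => a i / β i)
    have h2 : ∑ i, (a i / β i) ^ 2 * β i = T := by
      refine Finset.sum_congr rfl fun i _ => ?_
      have := (hpos i).ne'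
      change β i ≠ 0 at this
      field_simp
    rw [h2] at h1
    have h3 : r ((J (∑ i, (a i / β i) • v i)) (y : E)) = T := by
      rw [map_sum, _root_.sum_apply, map_sum]
      refine Finset.sum_congr rfl fun i _ => ?_
      rw [map_smul, _root_.smul_apply, map_smul, smul_eq_mul]
      change a i / β i * a i = _
      ring
    have h4 : |T| ≤ ‖(J (∑ i, (a i / β i) • v i))‖ := by
      rw [← h3]
      exact (hr _).trans (ContinuousLinearMap.unit_le_opNorm _ _ hy)
    have h5 : T ^ 2 ≤ K * T := by
      refine le_trans ?_ h1
      rw [← sq_abs]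
      gcongr
    rcases hT0.eq_or_lt with h0 | h0
    · rw [← h0]; exact hK.le
    · nlinarith
  have hpt : ∀ y : Metric.closedBall (0 : E) 1,
      ∑ i, (β i)⁻¹ * ‖(J (v i)) (y : E)‖ ^ 2 ≤ 2 * K := by
    intro y
    have h1 := hgen y RCLike.reLm (fun z => RCLike.abs_re_le_norm z)
    have h2 := hgen y RCLike.imLm (fun z => RCLike.abs_im_le_norm z)
    have h3 : ∑ i, (β i)⁻¹ * ‖(J (v i)) (y : E)‖ ^ 2 =
      ∑ i, (RCLike.reLm ((J (v i)) (y : E))) ^ 2 / β i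
      + ∑ i, (RCLike.imLm ((J (v i)) (y : E))) ^ 2 / β i := by
      rw [← Finset.sum_add_distrib]
      refine Finset.sum_congr rfl fun i _ => ?_
      rw [RCLike.norm_sq_eq_def]
      simp only [RCLike.reLm_coe, RCLike.imLm_coe]
      ring
    linarith
  have hfin := hL ((2 * K) • BoundedContinuousFunction.const _ 1
    - ∑ i, (β i)⁻¹ • innFun (J (v i)) (J (v i))) (fun y => by
      have := hpt y
      simp only [BoundedContinuousFunction.coe_sub, BoundedContinuousFunction.coe_sum,
        BoundedContinuousFunction.coe_smul, Pi.sub_apply, Finset.sum_apply, smul_eq_mul,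
        innFun_self, BoundedContinuousFunction.const_apply, mul_one]
      linarith)
  rw [map_sub, map_smul, hL1, map_sum, smul_eq_mul, mul_one] at hfin
  have : ∀ i, L ((β i)⁻¹ • innFun (J (v i)) (J (v i))) = 1 := by
    intro i
    rw [map_smul, smul_eq_mul]
    exact inv_mul_cancel₀ (hpos i).ne'
  simp only [this, Finset.sum_const, Finset.card_univ, Fintype.card_fin, nsmul_eq_mul,
    mul_one] at hfin
  linarith

lemma hard_dir (p q : ℝ) (hpq : p.HolderConjugate q) (C : ℝ) (hC : 0 < C)
    (h : ∀ (m : ℕ) (x : Fin m → E) (φ : Fin m → E →L[𝕜] 𝕜),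
        ∑ i, ‖φ i (x i)‖ ≤ C * (∑ i, ‖x i‖ ^ p) ^ (1 / p) * weakNorm q φ) :
    FiniteDimensional 𝕜 E := by
  have hq : 0 < q := hpq.symm.pos
  have hD : 0 < (2 * C) ^ q := by positivity
  obtain ⟨L, hL, hL1, hL2⟩ := pietsch (𝕜 := 𝕜) (E := E) q hq ((2 * C) ^ q)
    (summing_of_cohen p q hpq C hC h) hD
  obtain ⟨K, hK, hK2⟩ := lower_two q hq _ hD L hL hL1 hL2
  have hfR : Module.Finite ℝ (E →L[𝕜] 𝕜) := by
    rw [← Module.rank_lt_aleph0_iff]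
    by_contra hinf
    push Not at hinf
    obtain ⟨n, hn⟩ := exists_nat_gt (2 * K)
    have hn' : (n : Cardinal) ≤ Module.rank ℝ (E →L[𝕜] 𝕜) :=
      (Cardinal.natCast_lt_aleph0).le.trans hinf
    obtain ⟨s, hs, hs'⟩ := exists_finset_linearIndependent_of_le_rank hn'
    have h1 := finrank_span_finset_eq_card hs'
    have h2 := dim_bound L hL hL1 K hK hK2 (V := Submodule.span ℝ (s : Set (E →L[𝕜] 𝕜)))
      (Submodule.span ℝ (s : Set (E →L[𝕜] 𝕜))).subtype (Submodule.subtype_injective _)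
    rw [h1, hs] at h2
    linarith
  have : FiniteDimensional 𝕜 (StrongDual 𝕜 E) :=
    Module.Finite.of_restrictScalars_finite ℝ 𝕜 (E →L[𝕜] 𝕜)
  have : FiniteDimensional 𝕜 (StrongDual 𝕜 (StrongDual 𝕜 E)) := inferInstance
  exact FiniteDimensional.of_injective (V₂ := StrongDual 𝕜 (StrongDual 𝕜 E))
    (NormedSpace.inclusionInDoubleDualLi (E := E) 𝕜).toLinearMap
    (NormedSpace.inclusionInDoubleDualLi (E := E) 𝕜).injective

end Aux

/-- Dvoretzky–Rogers-type theorem for Cohen strongly `p`-summing operators: the identity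
operator of a Banach space `E` is Cohen strongly `p`-summing iff `E` is finite-dimensional. -/
theorem stmt10 {𝕜 E : Type*} [RCLike 𝕜]
    [NormedAddCommGroup E] [NormedSpace 𝕜 E] [CompleteSpace E]
    (p q : ℝ) (hp : 1 < p) (hq : 1 / p + 1 / q = 1) :
    (∃ C > 0, ∀ (m : ℕ) (x : Fin m → E) (φ : Fin m → E →L[𝕜] 𝕜),
        ∑ i, ‖φ i (x i)‖ ≤ C * (∑ i, ‖x i‖ ^ p) ^ (1 / p) * weakNorm q φ)
    ↔ FiniteDimensional 𝕜 E := by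
  have hpq : p.HolderConjugate q := by
    rw [Real.holderConjugate_iff]
    exact ⟨hp, by simpa using hq⟩
  constructor
  · rintro ⟨C, hC, h⟩
    exact hard_dir p q hpq C hC h
  · intro _
    exact easy_dir p q hpq
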